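/- Let G be a nilpotent finite group with |G| ≥ n², where n divides the order of G appropriately (i.e., n² divides |G| as a product over primes). Then for any [c] ∈ H²(G, ℂ*) and any n with n² ≤ |G| and n a product of prime powers dividing the corresponding Sylow orders, [c] admits an isotropic subgroup H < G with |H| = n. In particular, a non-degenerate class over a nilpotent group admits a Lagrangian, i.e., an isotropic subgroup of order √|G|. -/

import Mathlib

/-!
A 2-cocycle `c` on `G` defines a central extension `E` of `G` by `A`, and the isotropic subgroups
of `G` are the images of the subgroups `N` of `E` with `N ⊓ A = ⊥`. Such an `N` is built by
symplectic reduction. For a prime `p` dividing `|E ⧸ A|`, nilpotency gives an element of order `p`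
in the center of `E ⧸ A`; since `A` has `p`-th roots, it lifts to `z : E` of order `p`. Then
`g ↦ ⁅z, g⁆` is a character of `E` with values in the `p`-torsion of `A`, so the centralizer `C(z)`
has index dividing `p`. Hence `A` has an isomorphic image in `C(z) ⧸ ⟨z⟩`, whose index is
`|E ⧸ A|` divided by `p` or `p ^ 2`, and the preimage of a subgroup meeting that image trivially is
`p` times larger and meets `A` trivially. Each prime factor of `n` thus costs at most `p ^ 2`. If
the commutator pairing is nondegenerate, the index is divided by exactly `p ^ 2` and the pairing
stays nondegenerate, so `|E ⧸ A|` is a square.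
-/

open Subgroup
open scoped commutatorElement

namespace IsotropicSubgroup

universe u

section Coefficients

/-- The two properties of the coefficient group `ℂˣ` that matter for isotropic subgroups: elements
have roots of every prime order, and the elements killed by a prime `p` form a cyclic group. They
are shared by the unit group of any algebraically closed field, the circle and `ℚ/ℤ`. The group is
not required to be commutative so that the class applies to subgroups of arbitrary groups. -/
class CircleLike (A : Type*) [Group A] : Prop where
  exists_pow_eq {p : ℕ} (hp : p.Prime) (a : A) : ∃ b : A, b ^ p = a
  mem_zpowers {p : ℕ} (hp : p.Prime) {a b : A} (ha : a ^ p = 1) (ha1 : a ≠ 1) (hb : b ^ p = 1) :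
    b ∈ zpowers a

instance (k : Type*) [Field k] [IsAlgClosed k] : CircleLike kˣ where
  exists_pow_eq {p} hp a := by
    obtain ⟨b, hb⟩ := IsAlgClosed.exists_pow_nat_eq (a : k) hp.pos
    have hb0 : b ≠ 0 := by
      rintro rfl
      exact a.ne_zero (by rw [← hb, zero_pow hp.ne_zero])
    exact ⟨Units.mk0 b hb0, Units.ext hb⟩
  mem_zpowers {p} hp a b ha ha1 hb := by
    have : Fact p.Prime := ⟨hp⟩
    have hprim : IsPrimitiveRoot a p := orderOf_eq_prime ha ha1 ▸ IsPrimitiveRoot.orderOf a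
    rwa [hprim.zpowers_eq]

variable {A B : Type*} [Group A] [Group B]

theorem CircleLike.of_mulEquiv [CircleLike A] (e : A ≃* B) : CircleLike B where
  exists_pow_eq hp b := by
    obtain ⟨a, ha⟩ := exists_pow_eq hp (e.symm b)
    exact ⟨e a, by rw [← map_pow, ha, e.apply_symm_apply]⟩
  mem_zpowers hp a b ha ha1 hb := by
    obtain ⟨i, hi⟩ := mem_zpowers (a := e.symm a) (b := e.symm b) hp
      (by rw [← map_pow, ha, map_one]) (by simpa using ha1) (by rw [← map_pow, hb, map_one])
    exact ⟨i, e.symm.injective (by simpa using hi)⟩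

theorem card_dvd_of_forall_pow_eq_one [CircleLike A] {p : ℕ} (hp : p.Prime) (H : Subgroup A)
    (hH : ∀ a ∈ H, a ^ p = 1) : Nat.card H ∣ p := by
  rcases H.bot_or_exists_ne_one with rfl | ⟨a, haH, ha1⟩
  · simp
  · have hle : H ≤ zpowers a := fun b hb => CircleLike.mem_zpowers hp (hH a haH) ha1 (hH b hb)
    exact (card_dvd_of_le hle).trans (Nat.card_zpowers a ▸ orderOf_dvd_of_pow_eq_one (hH a haH))

theorem exists_zpow_eq_of_ker_le {T : Type*} [Group T] [CircleLike A] {p : ℕ} (hp : p.Prime)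
    {χ ψ : T →* A} (hχ : ∀ g, χ g ^ p = 1) (hle : χ.ker ≤ ψ.ker) :
    ∃ i : ℤ, ∀ g, ψ g = χ g ^ i := by
  by_cases htriv : ∀ g, χ g = 1
  · exact ⟨0, fun g => by simpa using hle (htriv g)⟩
  push Not at htriv
  obtain ⟨h, hh⟩ := htriv
  have hψh : ψ h ^ p = 1 := by
    rw [← map_pow]
    exact hle (by rw [MonoidHom.mem_ker, map_pow, hχ])
  obtain ⟨i, hi⟩ := mem_zpowers_iff.1 (CircleLike.mem_zpowers hp (hχ h) hh hψh)
  refine ⟨i, fun g => ?_⟩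
  obtain ⟨j, hj⟩ := mem_zpowers_iff.1 (CircleLike.mem_zpowers hp (hχ h) hh (hχ g))
  have hker : ψ (g * (h ^ j)⁻¹) = 1 := hle (by simp [MonoidHom.mem_ker, ← hj])
  calc ψ g = ψ h ^ j := by rwa [map_mul, map_inv, map_zpow, mul_inv_eq_one] at hker
    _ = χ g ^ i := by rw [← hi, ← hj, zpow_comm]

end Coefficients

section Commutators

variable {E : Type*} [Group E]

theorem commutatorElement_mul_right_of_mem_center (x g : E) {h : E} (hc : ⁅x, h⁆ ∈ center E) :
    ⁅x, g * h⁆ = ⁅x, g⁆ * ⁅x, h⁆ := by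
  rw [commutatorElement_mul_right_eq_mul_conj, mul_assoc _ g, mem_center_iff.1 hc g, ← mul_assoc,
    mul_inv_cancel_right]

theorem commutatorElement_mul_left_of_mem_center (x : E) {y g : E} (hc : ⁅y, g⁆ ∈ center E) :
    ⁅x * y, g⁆ = ⁅x, g⁆ * ⁅y, g⁆ := by
  rw [commutatorElement_mul_left_eq_conj_mul, mem_center_iff.1 hc x, mul_inv_cancel_right,
    mem_center_iff.1 hc]

theorem commutatorElement_zpow_left_of_mem_center {x g : E} (hc : ⁅x, g⁆ ∈ center E) (i : ℤ) :
    ⁅x ^ i, g⁆ = ⁅x, g⁆ ^ i := by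
  have hconj : g * x⁻¹ * g⁻¹ = x⁻¹ * ⁅x, g⁆ := by rw [commutatorElement_def]; group
  have hcomm : Commute x⁻¹ ⁅x, g⁆ := mem_center_iff.1 hc x⁻¹
  calc ⁅x ^ i, g⁆ = x ^ i * (g * x⁻¹ * g⁻¹) ^ i := by
        rw [conj_zpow, commutatorElement_def, inv_zpow]; group
    _ = ⁅x, g⁆ ^ i := by rw [hconj, hcomm.mul_zpow, inv_zpow, mul_inv_cancel_left]

theorem commutatorElement_pow_left_of_mem_center {x g : E} (hc : ⁅x, g⁆ ∈ center E) (n : ℕ) :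
    ⁅x ^ n, g⁆ = ⁅x, g⁆ ^ n := by
  simpa using commutatorElement_zpow_left_of_mem_center hc n

theorem commutatorElement_mem_iff_commute_mk {A : Subgroup E} [A.Normal] {x g : E} :
    ⁅x, g⁆ ∈ A ↔ Commute (x : E ⧸ A) g := by
  rw [← QuotientGroup.eq_one_iff, ← QuotientGroup.mk'_apply, map_commutatorElement,
    commutatorElement_eq_one_iff_commute]
  rfl

theorem normal_of_le_center {A : Subgroup E} (hA : A ≤ center E) : A.Normal :=
  ⟨fun a ha g => by rwa [mem_center_iff.1 (hA ha) g, mul_inv_cancel_right]⟩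

variable {A : Subgroup E}

/-- The pairing `g ↦ ⁅x, g⁆` with a fixed element `x`, as a character of any subgroup `S` on which
it takes values in the central subgroup `A`. -/
@[simps!]
def commutatorHom (hA : A ≤ center E) (x : E) (S : Subgroup E) (hS : ∀ g ∈ S, ⁅x, g⁆ ∈ A) :
    S →* A :=
  MonoidHom.mk' (fun g => ⟨⁅x, (g : E)⁆, hS g g.2⟩) fun g h =>
    Subtype.ext (commutatorElement_mul_right_of_mem_center x g (hA (hS h h.2)))

theorem ker_commutatorHom (hA : A ≤ center E) (x : E) (S : Subgroup E)
    (hS : ∀ g ∈ S, ⁅x, g⁆ ∈ A) :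
    (commutatorHom hA x S hS).ker = (centralizer {x}).subgroupOf S := by
  ext g
  simp [MonoidHom.mem_ker, mem_subgroupOf, mem_centralizer_singleton_iff, Subtype.ext_iff,
    commutatorElement_eq_one_iff_mul_comm, eq_comm]

theorem commutatorHom_pow_eq_one (hA : A ≤ center E) {x : E} {S : Subgroup E}
    (hS : ∀ g ∈ S, ⁅x, g⁆ ∈ A) {n : ℕ} (hx : x ^ n = 1) (g : S) :
    commutatorHom hA x S hS g ^ n = 1 := by
  apply Subtype.ext
  change ⁅x, (g : E)⁆ ^ n = 1
  rw [← commutatorElement_pow_left_of_mem_center (hA (hS g g.2)), hx, commutatorElement_one_left]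

theorem relIndex_centralizer_dvd_orderOf [CircleLike A] (hA : A ≤ center E) {x : E}
    (hx : (orderOf x).Prime) {S : Subgroup E} (hS : ∀ g ∈ S, ⁅x, g⁆ ∈ A) :
    (centralizer {x}).relIndex S ∣ orderOf x := by
  rw [relIndex, ← ker_commutatorHom hA x S hS, index_ker]
  apply card_dvd_of_forall_pow_eq_one hx
  rintro _ ⟨g, rfl⟩
  exact commutatorHom_pow_eq_one hA hS (pow_orderOf_eq_one x) g

theorem index_centralizer_dvd_orderOf [CircleLike A] (hA : A ≤ center E) {x : E}
    (hx : (orderOf x).Prime) (hxA : ∀ g, ⁅x, g⁆ ∈ A) : (centralizer {x}).index ∣ orderOf x := by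
  simpa using relIndex_centralizer_dvd_orderOf hA hx (S := ⊤) fun g _ => hxA g

end Commutators

section CentralElements

variable {E : Type*} [Group E]

theorem exists_commutatorElement_mem_of_dvd_card_center_quotient {A : Subgroup E} [A.Normal]
    [Finite (E ⧸ A)] {p : ℕ} (hp : p.Prime) (hdvd : p ∣ Nat.card (center (E ⧸ A))) :
    ∃ x ∉ A, x ^ p ∈ A ∧ ∀ g, ⁅x, g⁆ ∈ A := by
  have : Fact p.Prime := ⟨hp⟩
  obtain ⟨⟨y, hy⟩, hord⟩ := exists_prime_orderOf_dvd_card' p hdvd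
  rw [Subgroup.orderOf_mk] at hord
  obtain ⟨x, rfl⟩ := QuotientGroup.mk_surjective y
  refine ⟨x, fun hx => ?_, ?_, fun g => ?_⟩
  · rw [(QuotientGroup.eq_one_iff x).2 hx, orderOf_one] at hord
    exact hp.one_lt.ne hord
  · rw [← QuotientGroup.eq_one_iff, QuotientGroup.mk_pow, ← hord, pow_orderOf_eq_one]
  · exact commutatorElement_mem_iff_commute_mk.2 (mem_center_iff.1 hy g).symm

theorem prime_dvd_card_center (G : Type*) [Group G] [Group.IsNilpotent G] [Finite G] {p : ℕ}
    (hp : p.Prime) (hdvd : p ∣ Nat.card G) : p ∣ Nat.card (center G) := by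
  suffices ∀ [Finite G], p ∣ Nat.card G → p ∣ Nat.card (center G) from this hdvd
  refine Group.nilpotent_center_quotient_ind
    (P := fun G _ _ => ∀ [Finite G], p ∣ Nat.card G → p ∣ Nat.card (center G)) G ?_ ?_
  · intro G _ _ _ h
    exact absurd h (by simpa using hp.one_lt.ne')
  · intro G _ _ ih _ h
    by_contra hcenter
    rw [card_eq_card_quotient_mul_card_subgroup (center G)] at h
    obtain ⟨x, hxcenter, hxp, hx⟩ := exists_commutatorElement_mem_of_dvd_card_center_quotient hp
      (ih ((hp.dvd_mul.1 h).resolve_right hcenter))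
    refine hxcenter (mem_center_iff.2 fun g => ?_)
    have hpow : (⟨⁅x, g⁆, hx g⟩ : center G) ^ p = 1 := Subtype.ext <| by
      change ⁅x, g⁆ ^ p = 1
      rw [← commutatorElement_pow_left_of_mem_center (hx g),
        commutatorElement_eq_one_iff_mul_comm, mem_center_iff.1 hxp]
    have hone : (⟨⁅x, g⁆, hx g⟩ : center G) = 1 :=
      (Nat.Coprime.pow_left_bijective ((hp.coprime_iff_not_dvd.2 hcenter).symm)).injective
        (by simpa using hpow)
    exact (commutatorElement_eq_one_iff_mul_comm.1 (congrArg Subtype.val hone)).symm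

theorem exists_orderOf_eq_and_commutatorElement_mem [Group.IsNilpotent E] {A : Subgroup E}
    [CircleLike A] (hA : A ≤ center E) (hindex : A.index ≠ 0) {p : ℕ} (hp : p.Prime)
    (hdvd : p ∣ A.index) : ∃ z ∉ A, orderOf z = p ∧ ∀ g, ⁅z, g⁆ ∈ A := by
  have : Fact p.Prime := ⟨hp⟩
  have := normal_of_le_center hA
  have : Finite (E ⧸ A) := Nat.finite_of_card_ne_zero hindex
  obtain ⟨x, hxA, hxp, hx⟩ := exists_commutatorElement_mem_of_dvd_card_center_quotient hp
    (prime_dvd_card_center (E ⧸ A) hp hdvd)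
  obtain ⟨⟨b, hb⟩, hbp⟩ := CircleLike.exists_pow_eq hp (⟨x ^ p, hxp⟩ : A)
  have hbp : b ^ p = x ^ p := congrArg Subtype.val hbp
  have hcenter : b⁻¹ ∈ center E := hA (inv_mem hb)
  have hzA : x * b⁻¹ ∉ A := by rwa [mul_mem_cancel_right (inv_mem hb)]
  refine ⟨x * b⁻¹, hzA, orderOf_eq_prime ?_ fun hz => hzA (hz ▸ one_mem A), fun g => ?_⟩
  · have hcomm : Commute x b⁻¹ := mem_center_iff.1 hcenter x
    rw [hcomm.mul_pow, inv_pow, hbp, mul_inv_cancel]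
  · have hone : ⁅b⁻¹, g⁆ = 1 :=
      commutatorElement_eq_one_iff_mul_comm.2 (mem_center_iff.1 hcenter g).symm
    rw [commutatorElement_mul_left_of_mem_center x (hone ▸ one_mem _), hone, mul_one]
    exact hx g

end CentralElements

section DisjointKernel

variable {G H : Type*} [Group G] [Group H]

/-- A subgroup meeting the kernel of a homomorphism trivially is isomorphic to its image. -/
noncomputable def equivMapOfDisjointKer (f : G →* H) (N : Subgroup G) (hN : Disjoint N f.ker) :
    N ≃* N.map f :=
  MulEquiv.ofBijective (f.subgroupMap N) <| by
    refine ⟨(injective_iff_map_eq_one _).2 fun x hx => ?_, f.subgroupMap_surjective N⟩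
    exact Subtype.ext (disjoint_def.1 hN x.2 (congrArg Subtype.val hx))

theorem CircleLike.map {A : Subgroup G} [CircleLike A] (f : G →* H) (hA : Disjoint A f.ker) :
    CircleLike (A.map f) :=
  .of_mulEquiv (equivMapOfDisjointKer f A hA)

theorem index_eq_index_map_mk_mul_card {A Z : Subgroup G} [A.Normal] [Z.Normal]
    (hAZ : Disjoint Z A) :
    A.index = (A.map (QuotientGroup.mk' Z)).index * Nat.card Z := by
  have hrel : A.relIndex (A ⊔ Z) = Nat.card Z := by
    rw [relIndex_sup_left, ← inf_relIndex_right, hAZ.symm.eq_bot, relIndex_bot_left]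
  rw [index_map, QuotientGroup.ker_mk', QuotientGroup.range_mk', index_top, mul_one, ← hrel,
    mul_comm, relIndex_mul_index le_sup_left]

theorem card_comap_mk (Z : Subgroup G) [Z.Normal] (N : Subgroup (G ⧸ Z)) :
    Nat.card (N.comap (QuotientGroup.mk' Z)) = Nat.card Z * Nat.card N := by
  rw [← Nat.card_prod]
  exact Nat.card_congr (QuotientGroup.preimageMkEquivSubgroupProdSet Z N)

theorem disjoint_comap_mk {A Z : Subgroup G} [Z.Normal] (hAZ : Disjoint Z A)
    {N : Subgroup (G ⧸ Z)} (hN : Disjoint N (A.map (QuotientGroup.mk' Z))) :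
    Disjoint (N.comap (QuotientGroup.mk' Z)) A := by
  refine disjoint_def.2 fun {x} hxN hxA => disjoint_def.1 hAZ ?_ hxA
  rw [← QuotientGroup.eq_one_iff]
  exact disjoint_def.1 hN hxN (mem_map_of_mem _ hxA)

end DisjointKernel

section Reduction

variable {E : Type*} [Group E]

theorem zpowers_subgroupOf_centralizer_le_center (z : E) :
    (zpowers z).subgroupOf (centralizer {z}) ≤ center (centralizer {z}) := by
  rintro ⟨x, hx⟩ hxz
  obtain ⟨i, rfl⟩ := mem_zpowers_iff.1 (mem_subgroupOf.1 hxz)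
  refine mem_center_iff.2 fun g => Subtype.ext ?_
  have hgz : Commute (g : E) z := mem_centralizer_singleton_iff.1 g.2
  exact hgz.zpow_right i

instance (z : E) : ((zpowers z).subgroupOf (centralizer {z})).Normal :=
  normal_of_le_center (zpowers_subgroupOf_centralizer_le_center z)

/-- The quotient `C(z) / ⟨z⟩`, the analogue of the symplectic reduction `z^⊥ / z` for the commutator
pairing. -/
abbrev Reduction (z : E) : Type _ :=
  centralizer {z} ⧸ (zpowers z).subgroupOf (centralizer {z})

/-- The subgroup of `Reduction z` induced by `A`. For central `A` it is the image of `A` and plays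
the role of `A` in the reduction; in general only the part of `A` centralizing `z` contributes. -/
def reducedSubgroup (A : Subgroup E) (z : E) : Subgroup (Reduction z) :=
  (A.subgroupOf (centralizer {z})).map (QuotientGroup.mk' _)

variable {A : Subgroup E}

theorem reducedSubgroup_le_center (hA : A ≤ center E) (z : E) :
    reducedSubgroup A z ≤ center (Reduction z) := by
  rintro _ ⟨a, ha, rfl⟩
  refine mem_center_iff.2 fun g => ?_
  obtain ⟨g, rfl⟩ := QuotientGroup.mk_surjective g
  exact congrArg _ (Subtype.ext (mem_center_iff.1 (hA ha) g))

theorem card_zpowers_subgroupOf_centralizer (z : E) :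
    Nat.card ((zpowers z).subgroupOf (centralizer {z})) = orderOf z := by
  have hle : zpowers z ≤ centralizer {z} :=
    zpowers_le.2 (mem_centralizer_singleton_iff.2 rfl)
  rw [Nat.card_congr (subgroupOfEquivOfLe hle).toEquiv, Nat.card_zpowers]

theorem disjoint_zpowers_of_notMem {z : E} (hz : (orderOf z).Prime) (hzA : z ∉ A) :
    Disjoint (zpowers z) A := by
  have : Fact (Nat.card (zpowers z)).Prime := ⟨by rwa [Nat.card_zpowers]⟩
  rcases (A.subgroupOf (zpowers z)).eq_bot_or_eq_top_of_prime_card with hbot | htop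
  · exact (subgroupOf_eq_bot.1 hbot).symm
  · exact absurd (subgroupOf_eq_top.1 htop (mem_zpowers z)) hzA

theorem disjoint_subgroupOf {B C : Subgroup E} (h : Disjoint B C) (K : Subgroup E) :
    Disjoint (B.subgroupOf K) (C.subgroupOf K) :=
  disjoint_def.2 fun hB hC => Subtype.ext (disjoint_def.1 h hB hC)

theorem index_eq_index_reducedSubgroup_mul (hA : A ≤ center E) {z : E}
    (hzA : Disjoint (zpowers z) A) :
    A.index = (reducedSubgroup A z).index * orderOf z * (centralizer {z}).index := by
  have := normal_of_le_center hA
  rw [← relIndex_mul_index (hA.trans (center_le_centralizer _)), relIndex, reducedSubgroup,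
    index_eq_index_map_mk_mul_card (disjoint_subgroupOf hzA (centralizer {z})),
    card_zpowers_subgroupOf_centralizer]

theorem circleLike_reducedSubgroup [CircleLike A] (hA : A ≤ center E) {z : E}
    (hzA : Disjoint (zpowers z) A) : CircleLike (reducedSubgroup A z) := by
  have : CircleLike (A.subgroupOf (centralizer {z})) :=
    .of_mulEquiv (subgroupOfEquivOfLe (hA.trans (center_le_centralizer _))).symm
  refine CircleLike.map _ ?_
  rw [QuotientGroup.ker_mk']
  exact (disjoint_subgroupOf hzA _).symm

theorem exists_disjoint_card_eq_orderOf_mul {z : E} (hzA : Disjoint (zpowers z) A)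
    {N : Subgroup (Reduction z)} (hN : Disjoint N (reducedSubgroup A z)) :
    ∃ M : Subgroup E, Disjoint M A ∧ Nat.card M = orderOf z * Nat.card N := by
  refine ⟨(N.comap (QuotientGroup.mk' _)).map (centralizer {z}).subtype, ?_, ?_⟩
  · rw [disjoint_def]
    rintro _ ⟨x, hxN, rfl⟩ hxA
    exact congrArg Subtype.val
      (disjoint_def.1 (disjoint_comap_mk (disjoint_subgroupOf hzA _) hN) hxN hxA)
  · rw [card_map_of_injective (subtype_injective _), card_comap_mk,
      card_zpowers_subgroupOf_centralizer]

end Reduction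

section Nondegenerate

variable {E : Type*} [Group E] {A : Subgroup E}

/-- The commutator pairing of `E ⧸ A` is nondegenerate: no element outside `A` pairs trivially with
all the elements commuting with it modulo `A`. -/
def IsCommutatorNondegenerate (A : Subgroup E) : Prop :=
  ∀ x ∉ A, ∃ g, ⁅x, g⁆ ∈ A ∧ ⁅x, g⁆ ≠ 1

theorem exists_zpow_commutatorElement_eq [CircleLike A] (hA : A ≤ center E) {x z : E}
    (hz : (orderOf z).Prime) (hzcomm : ∀ g, ⁅z, g⁆ ∈ A)
    (hx : ∀ g, ⁅z, g⁆ = 1 → ⁅x, g⁆ ∈ A → ⁅x, g⁆ = 1) :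
    ∃ i : ℤ, ∀ g, ⁅x, g⁆ ∈ A → ⁅x, g⁆ = ⁅z, g⁆ ^ i := by
  have := normal_of_le_center hA
  let T : Subgroup E := (centralizer {(x : E ⧸ A)}).comap (QuotientGroup.mk' A)
  have mem_T (g : E) : g ∈ T ↔ ⁅x, g⁆ ∈ A := by
    rw [commutatorElement_mem_iff_commute_mk, commute_iff_eq, eq_comm]
    exact mem_centralizer_singleton_iff
  let χ := commutatorHom hA z T fun g _ => hzcomm g
  let ψ := commutatorHom hA x T fun g hg => (mem_T g).1 hg
  have hker : χ.ker ≤ ψ.ker := fun g hg =>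
    Subtype.ext (hx g (congrArg Subtype.val hg) ((mem_T g).1 g.2))
  obtain ⟨i, hi⟩ := exists_zpow_eq_of_ker_le hz
    (commutatorHom_pow_eq_one hA _ (pow_orderOf_eq_one z)) hker
  exact ⟨i, fun g hg => congrArg Subtype.val (hi ⟨g, (mem_T g).2 hg⟩)⟩

-- The analogue of `z^⊥⊥ = ⟨z⟩` in symplectic linear algebra.
theorem IsCommutatorNondegenerate.exists_mul_zpow_mem [CircleLike A]
    (hnd : IsCommutatorNondegenerate A) (hA : A ≤ center E) {x z : E} (hz : (orderOf z).Prime)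
    (hzcomm : ∀ g, ⁅z, g⁆ ∈ A)
    (hx : ∀ g, ⁅z, g⁆ = 1 → ⁅x, g⁆ ∈ A → ⁅x, g⁆ = 1) : ∃ i : ℤ, x * z ^ i ∈ A := by
  obtain ⟨i, hi⟩ := exists_zpow_commutatorElement_eq hA hz hzcomm hx
  refine ⟨-i, by_contra fun hxz => ?_⟩
  obtain ⟨g, hgA, hg1⟩ := hnd _ hxz
  have hzi : ⁅z ^ (-i), g⁆ = ⁅z, g⁆ ^ (-i) :=
    commutatorElement_zpow_left_of_mem_center (hA (hzcomm g)) _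
  have hziA : ⁅z ^ (-i), g⁆ ∈ A := hzi ▸ zpow_mem (hzcomm g) _
  rw [commutatorElement_mul_left_of_mem_center x (hA hziA)] at hgA hg1
  have hxg := hi g ((mul_mem_cancel_right hziA).1 hgA)
  exact hg1 (by rw [hxg, hzi, zpow_neg, mul_inv_cancel])

theorem IsCommutatorNondegenerate.reduction [CircleLike A]
    (hnd : IsCommutatorNondegenerate A) (hA : A ≤ center E) {z : E} (hz : (orderOf z).Prime)
    (hzA : z ∉ A) (hzcomm : ∀ g, ⁅z, g⁆ ∈ A) :
    IsCommutatorNondegenerate (reducedSubgroup A z) := by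
  intro y hy
  obtain ⟨k, rfl⟩ := QuotientGroup.mk_surjective y
  by_contra! htriv
  obtain ⟨i, hi⟩ : ∃ i : ℤ, (k : E) * z ^ i ∈ A := by
    refine hnd.exists_mul_zpow_mem hA hz hzcomm fun g hzg hkg => ?_
    have hg : g ∈ centralizer {z} :=
      mem_centralizer_singleton_iff.2 (commutatorElement_eq_one_iff_mul_comm.1 hzg).symm
    let h : centralizer {z} := ⟨g, hg⟩
    have hone := htriv h ⟨⁅k, h⁆, hkg, rfl⟩
    have : ⁅k, h⁆ ∈ (zpowers z).subgroupOf (centralizer {z}) := (QuotientGroup.eq_one_iff _).1 hone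
    exact disjoint_def.1 (disjoint_zpowers_of_notMem hz hzA) this hkg
  let ζ : centralizer {z} := ⟨z, mem_centralizer_singleton_iff.2 rfl⟩
  refine hy ⟨k * ζ ^ i, hi, QuotientGroup.eq.2 ?_⟩
  exact mem_subgroupOf.2 ⟨-i, by simp [ζ]⟩

theorem IsCommutatorNondegenerate.index_centralizer_eq_orderOf [CircleLike A]
    (hnd : IsCommutatorNondegenerate A) (hA : A ≤ center E) {z : E} (hz : (orderOf z).Prime)
    (hzA : z ∉ A) (hzcomm : ∀ g, ⁅z, g⁆ ∈ A) :
    (centralizer {z}).index = orderOf z := by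
  refine ((Nat.dvd_prime hz).1 (index_centralizer_dvd_orderOf hA hz hzcomm)).resolve_left ?_
  intro hone
  obtain ⟨g, -, hg⟩ := hnd z hzA
  refine hg (commutatorElement_eq_one_iff_mul_comm.2 ?_)
  exact (mem_centralizer_singleton_iff.1 (index_eq_one.1 hone ▸ mem_top g)).symm

end Nondegenerate

section Induction

theorem exists_disjoint_card_eq {E : Type u} [Group E] [Group.IsNilpotent E] {A : Subgroup E}
    [CircleLike A] (hA : A ≤ center E) (hindex : A.index ≠ 0) {n : ℕ} (hn : n ^ 2 ∣ A.index) :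
    ∃ N : Subgroup E, Disjoint N A ∧ Nat.card N = n := by
  induction n using induction_on_primes generalizing E with
  | zero => exact absurd (by simpa using hn) hindex
  | one => exact ⟨⊥, disjoint_bot_left, card_bot⟩
  | prime_mul p a hp ih =>
    have hdvd : p ∣ A.index := (Dvd.intro _ rfl).trans ((dvd_pow_self _ two_ne_zero).trans hn)
    obtain ⟨z, hzA, rfl, hzcomm⟩ := exists_orderOf_eq_and_commutatorElement_mem hA hindex hp hdvd
    have hdisj := disjoint_zpowers_of_notMem hp hzA
    have hmul := index_eq_index_reducedSubgroup_mul hA hdisj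
    have := circleLike_reducedSubgroup hA hdisj
    have ha : a ^ 2 ∣ (reducedSubgroup A z).index := by
      refine Nat.dvd_of_mul_dvd_mul_left (pow_pos hp.pos 2) ?_
      calc orderOf z ^ 2 * a ^ 2 ∣ A.index := by rwa [← mul_pow]
        _ ∣ (reducedSubgroup A z).index * orderOf z * orderOf z := by
          rw [hmul]
          exact mul_dvd_mul_left _ (index_centralizer_dvd_orderOf hA hp hzcomm)
        _ = orderOf z ^ 2 * (reducedSubgroup A z).index := by ring
    have hindex' : (reducedSubgroup A z).index ≠ 0 := fun h => hindex (by simp [hmul, h])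
    obtain ⟨N, hN, rfl⟩ := ih (reducedSubgroup_le_center hA z) hindex' ha
    exact exists_disjoint_card_eq_orderOf_mul hdisj hN

theorem IsCommutatorNondegenerate.isSquare_index {E : Type u} [Group E] [Group.IsNilpotent E]
    {A : Subgroup E} [CircleLike A] (hnd : IsCommutatorNondegenerate A) (hA : A ≤ center E)
    (hindex : A.index ≠ 0) : IsSquare A.index := by
  induction hm : A.index using Nat.strong_induction_on generalizing E with
  | h m ih =>
    subst hm
    by_cases hone : A.index = 1
    · exact hone ▸ IsSquare.one
    obtain ⟨p, hp, hdvd⟩ := Nat.exists_prime_and_dvd hone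
    obtain ⟨z, hzA, rfl, hzcomm⟩ := exists_orderOf_eq_and_commutatorElement_mem hA hindex hp hdvd
    have hdisj := disjoint_zpowers_of_notMem hp hzA
    have hmul := index_eq_index_reducedSubgroup_mul hA hdisj
    rw [hnd.index_centralizer_eq_orderOf hA hp hzA hzcomm, mul_assoc] at hmul
    have hindex' : (reducedSubgroup A z).index ≠ 0 := fun h => hindex (by simp [hmul, h])
    have hlt : (reducedSubgroup A z).index < A.index := by
      rw [hmul]
      exact lt_mul_of_one_lt_right (Nat.pos_of_ne_zero hindex')
        (one_lt_mul'' hp.one_lt hp.one_lt)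
    have := circleLike_reducedSubgroup hA hdisj
    rw [hmul]
    exact (ih _ hlt (hnd.reduction hA hp hzA hzcomm) (reducedSubgroup_le_center hA z)
      hindex' rfl).mul (.mul_self _)

end Induction

section Cocycles

variable {G A : Type*} [Group G] [CommGroup A]

/-- `c` is a 2-cocycle on `G` with values in the trivial `G`-module `A`, written multiplicatively
and not assumed to be normalized. -/
def IsTwoCocycle (c : G → G → A) : Prop :=
  ∀ g h k : G, c g h * c (g * h) k = c h k * c g (h * k)

/-- `H` is isotropic for `c`: the restriction of `c` to `H` is a coboundary. -/
def IsIsotropic (c : G → G → A) (H : Subgroup G) : Prop :=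
  ∃ f : H → A, ∀ a b : H, c (a : G) (b : G) = f a * f b * (f (a * b))⁻¹

/-- `c` is nondegenerate: for `x ≠ 1`, the character `g ↦ c x g / c g x` of the centralizer of `x`
is nontrivial. -/
def IsNondegenerate (c : G → G → A) : Prop :=
  ∀ x : G, x ≠ 1 → ∃ g : G, x * g = g * x ∧ c x g ≠ c g x

theorem IsTwoCocycle.one_left {c : G → G → A} (hc : IsTwoCocycle c) (g : G) : c 1 g = c 1 1 := by
  simpa using (hc 1 1 g).symm

theorem IsTwoCocycle.one_right {c : G → G → A} (hc : IsTwoCocycle c) (g : G) : c g 1 = c 1 1 := by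
  simpa using hc g 1 1

/-- The central extension of `G` by `A` defined by the 2-cocycle `c`, whose elements are the pairs
`(g, a)` multiplied by `(g, a) * (h, b) = (g * h, a * b * c g h)`. -/
@[ext]
structure CocycleExtension {c : G → G → A} (hc : IsTwoCocycle c) where
  base : G
  scalar : A

namespace CocycleExtension

variable {c : G → G → A} (hc : IsTwoCocycle c)

@[simps]
instance : Mul (CocycleExtension hc) :=
  ⟨fun x y => ⟨x.base * y.base, x.scalar * y.scalar * c x.base y.base⟩⟩

@[simps]
instance : One (CocycleExtension hc) :=
  ⟨⟨1, (c 1 1)⁻¹⟩⟩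

@[simps]
instance : Inv (CocycleExtension hc) :=
  ⟨fun x => ⟨x.base⁻¹, (c 1 1)⁻¹ * (x.scalar * c x.base⁻¹ x.base)⁻¹⟩⟩

instance : Group (CocycleExtension hc) :=
  Group.ofLeftAxioms
    (fun x y z => by
      ext
      · exact mul_assoc _ _ _
      · have h := hc x.base y.base z.base
        simp only [mul_scalar, mul_base]
        calc x.scalar * y.scalar * c x.base y.base * z.scalar * c (x.base * y.base) z.base
            = x.scalar * y.scalar * z.scalar * (c x.base y.base * c (x.base * y.base) z.base) := by
              ac_rfl
          _ = x.scalar * (y.scalar * z.scalar * c y.base z.base) * c x.base (y.base * z.base) := by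
              rw [h]; ac_rfl)
    (fun x => by
      ext
      · exact one_mul _
      · simp [hc.one_left x.base])
    (fun x => by
      ext
      · exact inv_mul_cancel _
      · simp [mul_assoc])

/-- The projection of the extension onto `G`. -/
@[simps]
def proj : CocycleExtension hc →* G where
  toFun := base
  map_one' := rfl
  map_mul' _ _ := rfl

theorem proj_surjective : Function.Surjective (proj hc) := fun g => ⟨⟨g, 1⟩, rfl⟩

theorem index_ker_proj : (proj hc).ker.index = Nat.card G := by
  rw [index_ker, MonoidHom.range_eq_top_of_surjective _ (proj_surjective hc), card_top]

theorem ker_proj_le_center : (proj hc).ker ≤ center (CocycleExtension hc) := by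
  rintro ⟨_, a⟩ rfl
  refine mem_center_iff.2 fun y => ?_
  ext
  · simp
  · simp [hc.one_left, hc.one_right, mul_comm a]

/-- The coefficient group `A` is the kernel of the extension. The factor `(c 1 1)⁻¹` is there
because `c` need not be normalized. -/
def mulEquivKerProj : A ≃* (proj hc).ker where
  toFun a := ⟨⟨1, a * (c 1 1)⁻¹⟩, rfl⟩
  invFun x := (x : CocycleExtension hc).scalar * c 1 1
  left_inv a := inv_mul_cancel_right a _
  right_inv := by
    rintro ⟨⟨g, a⟩, hg : g = 1⟩
    simp [hg]
  map_mul' a b := by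
    ext
    · simp
    · simp [mul_assoc, mul_left_comm]

instance [Group.IsNilpotent G] : Group.IsNilpotent (CocycleExtension hc) :=
  Subgroup.isNilpotent_of_ker_le_center (proj hc) (ker_proj_le_center hc)

variable {hc}

theorem isCommutatorNondegenerate_ker_proj (hnd : IsNondegenerate c) :
    IsCommutatorNondegenerate (proj hc).ker := by
  intro x hx
  obtain ⟨g, hcomm, hg⟩ := hnd x.base hx
  refine ⟨⟨g, 1⟩, ?_, fun hone => hg ?_⟩
  · rw [MonoidHom.mem_ker, map_commutatorElement, commutatorElement_eq_one_iff_mul_comm]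
    exact hcomm
  · have h := congrArg scalar (commutatorElement_eq_one_iff_mul_comm.1 hone)
    simpa using h

theorem isIsotropic_map_proj {N : Subgroup (CocycleExtension hc)}
    (hN : Disjoint N (proj hc).ker) : IsIsotropic c (N.map (proj hc)) := by
  let lift : N.map (proj hc) ≃* N := (equivMapOfDisjointKer (proj hc) N hN).symm
  have base_lift (h : N.map (proj hc)) : (lift h : CocycleExtension hc).base = h :=
    congrArg Subtype.val ((equivMapOfDisjointKer (proj hc) N hN).apply_symm_apply h)
  refine ⟨fun h => (lift h : CocycleExtension hc).scalar⁻¹, fun a b => ?_⟩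
  dsimp only
  rw [map_mul, coe_mul, mul_scalar, base_lift, base_lift, inv_inv, ← mul_inv, inv_mul_cancel_left]

theorem exists_isIsotropic_card_eq {N : Subgroup (CocycleExtension hc)}
    (hN : Disjoint N (proj hc).ker) :
    ∃ H : Subgroup G, Nat.card H = Nat.card N ∧ IsIsotropic c H :=
  ⟨N.map (proj hc), (Nat.card_congr (equivMapOfDisjointKer (proj hc) N hN).toEquiv).symm,
    isIsotropic_map_proj hN⟩

end CocycleExtension

end Cocycles

end IsotropicSubgroup

open IsotropicSubgroup CocycleExtension in
theorem nilpotent_isotropic_subgroup_general {G A : Type*} [Group G] [Finite G]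
    [Group.IsNilpotent G] [CommGroup A] [CircleLike A] {c : G → G → A} (hc : IsTwoCocycle c) :
    (∀ n : ℕ, n ^ 2 ∣ Nat.card G → ∃ H : Subgroup G, Nat.card H = n ∧ IsIsotropic c H) ∧
      (IsNondegenerate c → ∃ H : Subgroup G, Nat.card H ^ 2 = Nat.card G ∧ IsIsotropic c H) := by
  have hcenter := ker_proj_le_center hc
  have hindex := index_ker_proj hc
  have hindex0 : (proj hc).ker.index ≠ 0 := hindex ▸ Nat.card_pos.ne'
  have : CircleLike (proj hc).ker := .of_mulEquiv (mulEquivKerProj hc)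
  have hisotropic (n : ℕ) (hn : n ^ 2 ∣ Nat.card G) :
      ∃ H : Subgroup G, Nat.card H = n ∧ IsIsotropic c H := by
    obtain ⟨N, hN, rfl⟩ := exists_disjoint_card_eq hcenter hindex0 (hindex ▸ hn)
    exact exists_isIsotropic_card_eq hN
  refine ⟨hisotropic, fun hnd => ?_⟩
  obtain ⟨n, hn⟩ := (isCommutatorNondegenerate_ker_proj hnd).isSquare_index hcenter hindex0
  rw [hindex, ← sq] at hn
  obtain ⟨H, rfl, hH⟩ := hisotropic n hn.symm.dvd
  exact ⟨H, hn.symm, hH⟩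

/-- Let `G` be a finite nilpotent group and `[c] ∈ H²(G, ℂ*)` any
class. For any `n` with `n²` dividing `|G|` (equivalently, `n` is a product of prime
powers whose squares divide the corresponding Sylow orders), `[c]` admits an
isotropic subgroup of order `n`. In particular a non-degenerate class over a
nilpotent group admits a Lagrangian: an isotropic subgroup of order `√|G|`. -/
theorem nilpotent_isotropic_subgroup
    {G : Type*} [Group G] [Fintype G] [Group.IsNilpotent G]
    (c : G → G → ℂˣ)
    (hc : ∀ g h k : G, c g h * c (g * h) k = c h k * c g (h * k)) :
    (∀ n : ℕ, n ^ 2 ∣ Fintype.card G →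
      ∃ H : Subgroup G, Nat.card H = n ∧
        ∃ f : H → ℂˣ, ∀ a b : H, c (a : G) (b : G) = f a * f b * (f (a * b))⁻¹) ∧
    ((∀ x : G, x ≠ 1 → ∃ g : G, x * g = g * x ∧ c x g ≠ c g x) →
      ∃ H : Subgroup G, (Nat.card H) ^ 2 = Fintype.card G ∧
        ∃ f : H → ℂˣ, ∀ a b : H, c (a : G) (b : G) = f a * f b * (f (a * b))⁻¹) := by
  rw [← Nat.card_eq_fintype_card]
  exact nilpotent_isotropic_subgroup_general hc
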